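/- Let N, K, M be positive integers and let P_1, ..., P_M be M pairwise orthogonal orthogonal projection matrices in Matrix (Fin N) (Fin N) ℂ (i.e., each P_m is Hermitian and idempotent, P_b * P_a = 0 for a ≠ b), each of rank K. Then the set D of detectable errors, D = {E : Matrix (Fin N) (Fin N) ℂ | (∀ a b, a ≠ b → P_b * E * P_a = 0) ∧ (∀ a, ∃ λ : ℂ, P_a * E * P_a = λ • P_a)}, is a ℂ-linear subspace of Matrix (Fin N) (Fin N) ℂ of dimension N² − (M*K)² + M. -/

import Mathlib

open Matrix

lemma idem_trace_aux {V : Type*} [AddCommGroup V] [Module ℂ V] [FiniteDimensional ℂ V]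
    (f : V →ₗ[ℂ] V) (h : ∀ x, f (f x) = f x) :
    LinearMap.trace ℂ V f = (Module.finrank ℂ (LinearMap.range f) : ℂ) := by
  have hp : LinearMap.IsProj (LinearMap.range f) f := by
    constructor
    · intro x; exact ⟨x, rfl⟩
    · rintro _ ⟨x, rfl⟩; exact h x
  exact hp.trace

lemma rank_trace_aux {N : ℕ} (P : Matrix (Fin N) (Fin N) ℂ) (h : P * P = P) :
    P.trace = (P.rank : ℂ) := by
  have := idem_trace_aux (Matrix.toLin' P) (fun x => by
    simp [Matrix.toLin'_apply, Matrix.mulVec_mulVec, h])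
  rw [Matrix.trace_toLin'_eq] at this
  rw [this, Matrix.rank]
  rfl

/-- The compression map `E ↦ Q E Q`. -/
noncomputable def compr {N : ℕ} (Q : Matrix (Fin N) (Fin N) ℂ) :
    Matrix (Fin N) (Fin N) ℂ →ₗ[ℂ] Matrix (Fin N) (Fin N) ℂ :=
  LinearMap.mulLeftRight ℂ (Q, Q)

lemma compr_apply {N : ℕ} (Q E : Matrix (Fin N) (Fin N) ℂ) : compr Q E = Q * E * Q := by
  simp [compr]

lemma compr_trace {N : ℕ} (Q : Matrix (Fin N) (Fin N) ℂ) :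
    LinearMap.trace ℂ _ (compr Q) = Q.trace ^ 2 := by
  rw [LinearMap.trace_eq_matrix_trace ℂ (Matrix.stdBasis ℂ (Fin N) (Fin N))]
  simp only [Matrix.trace, Matrix.diag, LinearMap.toMatrix_apply, Fintype.sum_prod_type,
    Matrix.stdBasis_eq_single, compr_apply, sq, Finset.sum_mul_sum]
  refine Finset.sum_congr rfl fun i _ => Finset.sum_congr rfl fun j _ => ?_
  have : ∀ A : Matrix (Fin N) (Fin N) ℂ,
      (Matrix.stdBasis ℂ (Fin N) (Fin N)).repr A (i, j) = A i j := by
    intro A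
    simp [Matrix.stdBasis]
  rw [this]
  simp [Matrix.mul_apply, Matrix.single_apply, Finset.sum_ite_eq, ite_and]

theorem hybrid_detectable_dimension (N K M : ℕ) (hN : 0 < N) (hK : 0 < K) (hM : 0 < M)
    (P : Fin M → Matrix (Fin N) (Fin N) ℂ)
    (hHerm : ∀ a, (P a).IsHermitian)
    (hIdem : ∀ a, P a * P a = P a)
    (hOrth : ∀ a b : Fin M, a ≠ b → P b * P a = 0)
    (hRank : ∀ a, (P a).rank = K) :
    ∃ D : Submodule ℂ (Matrix (Fin N) (Fin N) ℂ),
      (D : Set (Matrix (Fin N) (Fin N) ℂ)) =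
        {E | (∀ a b : Fin M, a ≠ b → P b * E * P a = 0) ∧
             (∀ a, ∃ lam : ℂ, P a * E * P a = lam • P a)} ∧
      Module.finrank ℂ D = N ^ 2 - (M * K) ^ 2 + M := by
  have hmul : ∀ a b, P a * P b = if a = b then P a else 0 := by
    intro a b
    split_ifs with h
    · rw [← h, hIdem]
    · exact hOrth b a (Ne.symm h)
  have hne : ∀ a, P a ≠ 0 := by
    intro a h
    have := hRank a
    rw [h, Matrix.rank_zero] at this
    omega
  set Q := ∑ a, P a with hQ
  have hQP : ∀ a, Q * P a = P a := by
    intro a; simp [hQ, Finset.sum_mul, hmul]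
  have hPQ : ∀ a, P a * Q = P a := by
    intro a; simp [hQ, Finset.mul_sum, hmul]
  have hQQ : Q * Q = Q := by
    conv_lhs => rw [hQ, Finset.sum_mul]
    simp only [hPQ, ← hQ]
  have hQtr : Q.trace = ((M * K : ℕ) : ℂ) := by
    rw [hQ, Matrix.trace_sum]
    simp [fun a => rank_trace_aux (P a) (hIdem a), hRank]
  have hS : ∀ x, compr Q (compr Q x) = compr Q x := by
    intro x
    simp only [compr_apply]
    calc Q * (Q * x * Q) * Q = (Q * Q) * x * (Q * Q) := by noncomm_ring
      _ = _ := by rw [hQQ]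
  have hSP : ∀ a, compr Q (P a) = P a := by
    intro a; rw [compr_apply, hQP, hPQ]
  have hr : Module.finrank ℂ (LinearMap.range (compr Q)) = (M * K) ^ 2 := by
    have h1 := idem_trace_aux (compr Q) hS
    rw [compr_trace, hQtr] at h1
    exact_mod_cast h1.symm
  have hrn := LinearMap.finrank_range_add_finrank_ker (compr Q)
  rw [hr, Module.finrank_matrix] at hrn
  simp only [Fintype.card_fin, Module.finrank_self, mul_one] at hrn
  have hli : LinearIndependent ℂ P := by
    rw [Fintype.linearIndependent_iff]
    intro g hg i
    have h2 : P i * ∑ j, g j • P j = 0 := by rw [hg, mul_zero]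
    simp [Finset.mul_sum, hmul] at h2
    exact h2.resolve_right (hne i)
  have hspan : Module.finrank ℂ (Submodule.span ℂ (Set.range P)) = M := by
    rw [finrank_span_eq_card hli, Fintype.card_fin]
  have hfix : ∀ x ∈ Submodule.span ℂ (Set.range P), compr Q x = x := by
    intro x hx
    induction hx using Submodule.span_induction with
    | mem x h => obtain ⟨a, rfl⟩ := h; exact hSP a
    | zero => simp
    | add x y _ _ h1 h2 => rw [map_add, h1, h2]
    | smul c x _ h => rw [map_smul, h]
  refine ⟨LinearMap.ker (compr Q) ⊔ Submodule.span ℂ (Set.range P), ?_, ?_⟩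
  · have key : ∀ (E : Matrix (Fin N) (Fin N) ℂ) a b,
        P b * E * P a = P b * compr Q E * P a := by
      intro E a b
      rw [compr_apply]
      calc P b * E * P a = (P b * Q) * E * (Q * P a) := by rw [hPQ, hQP]
        _ = _ := by noncomm_ring
    ext E
    simp only [SetLike.mem_coe, Set.mem_setOf_eq]
    constructor
    · intro hE
      obtain ⟨y, hy, z, hz, rfl⟩ := Submodule.mem_sup.1 hE
      obtain ⟨c, hc⟩ := (Submodule.mem_span_range_iff_exists_fun ℂ).1 hz
      have h3 : compr Q (y + z) = ∑ i, c i • P i := by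
        rw [map_add, LinearMap.mem_ker.1 hy, hfix z hz, zero_add, hc]
      have h4 : ∀ a b, P b * (y + z) * P a = if b = a then c b • P b else 0 := by
        intro a b
        rw [key, h3]
        simp [Finset.mul_sum, hmul]
      refine ⟨fun a b hab => ?_, fun a => ⟨c a, ?_⟩⟩
      · rw [h4, if_neg (Ne.symm hab)]
      · rw [h4, if_pos rfl]
    · rintro ⟨h1, h2⟩
      choose c hc using h2
      have h3 : compr Q E = ∑ i, c i • P i := by
        rw [compr_apply]
        conv_lhs => rw [hQ, Finset.sum_mul, Finset.sum_mul]
        refine Finset.sum_congr rfl fun i _ => ?_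
        rw [Finset.mul_sum, Finset.sum_eq_single i, hc]
        · intro b _ hb; exact h1 b i hb
        · simp
      refine Submodule.mem_sup.2 ⟨E - compr Q E, ?_, compr Q E, ?_, by simp⟩
      · rw [LinearMap.mem_ker, map_sub, hS, sub_self]
      · rw [h3]
        exact Submodule.sum_mem _ fun i _ =>
          Submodule.smul_mem _ _ (Submodule.subset_span ⟨i, rfl⟩)
  · have hinf : LinearMap.ker (compr Q) ⊓ Submodule.span ℂ (Set.range P) = ⊥ := by
      rw [eq_bot_iff]
      rintro x ⟨hx1, hx2⟩
      rw [Submodule.mem_bot, ← hfix x hx2]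
      exact hx1
    have h5 := Submodule.finrank_sup_add_finrank_inf_eq (LinearMap.ker (compr Q))
      (Submodule.span ℂ (Set.range P))
    rw [hinf, finrank_bot, hspan] at h5
    rw [sq N, ← hrn]
    omega
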